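/- Let R be a division ring and P(x) ∈ R[x]. If P(x) has two distinct right roots in the same conjugacy class of R, then P(x) has infinitely many right roots in that conjugacy class. -/

import Mathlib

open Polynomial

/-!
Let coefficients act on `R` by left multiplication and `X` by right multiplication by `a`; then
`P` acts by `r ↦ ∑ pᵢ r aⁱ`, which for `r ≠ 0` equals `P(r a r⁻¹) r`. Hence `r a r⁻¹` is a root of
`P` exactly when `r` lies in the kernel of this action, and the kernel is additive. Two distinct
roots `a` and `q a q⁻¹` of `P` put `q` and the whole centralizer of `a` into the kernel, so every
`q + c` with `c` in the centralizer gives a root. These roots are distinct: if `q + c` and `q + c'`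
conjugate `a` to the same `b`, then `c - c'` also conjugates `a` to `b`, while commuting with `a`.

It remains to see that a noncentral element `a` has an infinite centralizer. If it is finite, every
nonzero polynomial acts with finite kernel, as one sees by splitting off right factors `X - b`.
But some `X ^ n - X ^ m` with `m < n` acts as zero, so `R` is finite, hence commutative by
Wedderburn.
-/

section TwistedEval

variable {R : Type*} [Ring R]

/-- The ring homomorphism `R[X] → End(R, +)` letting coefficients act by left multiplication and
`X` by right multiplication by `a`, so that `twistedEval a P r = ∑ pᵢ r aⁱ`. It is used to describe
the roots of `P` that are conjugate to `a`. Additive endomorphisms are encoded as `ℤ`-linear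
maps. -/
noncomputable def twistedEval (a : R) : R[X] →+* Module.End ℤ R :=
  eval₂RingHom' (Module.toModuleEnd ℤ R) (LinearMap.mulRight ℤ a) fun b =>
    LinearMap.ext fun r => (mul_assoc b r a).symm

lemma twistedEval_C (a p r : R) : twistedEval a (C p) r = p * r := by
  simp [twistedEval, eval₂RingHom']

lemma twistedEval_X (a r : R) : twistedEval a X r = r * a := by
  simp [twistedEval, eval₂RingHom']

lemma twistedEval_X_pow (a r : R) (n : ℕ) : twistedEval a (X ^ n) r = r * a ^ n := by
  induction n with
  | zero => simp
  | succ n ih =>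
    rw [pow_succ', map_mul, Module.End.mul_apply, twistedEval_X, ih, pow_succ, mul_assoc]

lemma twistedEval_X_sub_C (a b r : R) : twistedEval a (X - C b) r = r * a - b * r := by
  rw [map_sub, LinearMap.sub_apply, twistedEval_X, twistedEval_C]

lemma twistedEval_apply_of_semiconjBy {a b r : R} (h : SemiconjBy r a b) (P : R[X]) :
    twistedEval a P r = P.eval b * r := by
  induction P using Polynomial.induction_on' with
  | add P Q hP hQ => rw [map_add, LinearMap.add_apply, hP, hQ, eval_add, add_mul]
  | monomial n p =>
    rw [← C_mul_X_pow_eq_monomial, map_mul, Module.End.mul_apply, twistedEval_X_pow,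
      twistedEval_C, (h.pow_right n).eq, eval_C_mul, eval_X_pow, mul_assoc]

end TwistedEval

lemma exists_eq_mul_X_sub_C_add_C_eval {R : Type*} [Ring R] (P : R[X]) (b : R) :
    ∃ Q : R[X], P = Q * (X - C b) + C (P.eval b) := by
  induction P using Polynomial.induction_on' with
  | add P P' hP hP' =>
    obtain ⟨Q, hQ⟩ := hP
    obtain ⟨Q', hQ'⟩ := hP'
    refine ⟨Q + Q', ?_⟩
    rw [eval_add, C_add, add_mul, add_add_add_comm, ← hQ, ← hQ']
  | monomial n p =>
    refine ⟨C p * ∑ i ∈ Finset.range n, X ^ i * C b ^ (n - 1 - i), ?_⟩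
    rw [mul_assoc, (commute_X (C b)).geom_sum₂_mul, eval_monomial, C_mul, C_pow, mul_sub,
      sub_add_cancel, C_mul_X_pow_eq_monomial]

lemma finite_ker_comp {S A B C : Type*} [Semiring S] [AddCommGroup A] [AddCommGroup B]
    [AddCommMonoid C] [Module S A] [Module S B] [Module S C] {g : B →ₗ[S] C} {f : A →ₗ[S] B}
    (hg : (g.ker : Set B).Finite) (hf : (f.ker : Set A).Finite) :
    ((g ∘ₗ f).ker : Set A).Finite := by
  refine hg.preimage' (f := f) fun b _ => ?_
  obtain hb | ⟨x, rfl⟩ := (f ⁻¹' {b}).eq_empty_or_nonempty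
  · exact hb ▸ Set.finite_empty
  · refine (hf.image (x + ·)).subset fun y hy => ⟨y - x, ?_, add_sub_cancel x y⟩
    rw [SetLike.mem_coe, LinearMap.mem_ker, map_sub, hy, sub_self]

lemma mem_centralizer_singleton {M : Type*} [Mul M] {a c : M} :
    c ∈ Set.centralizer {a} ↔ Commute c a := by
  simp [Set.mem_centralizer_iff, commute_iff_eq, eq_comm]

lemma semiconjBy_conj₀ {G₀ : Type*} [GroupWithZero G₀] {q : G₀} (hq : q ≠ 0) (a : G₀) :
    SemiconjBy q a (q * a * q⁻¹) :=
  (inv_mul_cancel_right₀ hq (q * a)).symm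

lemma add_ne_zero_of_not_commute {R : Type*} [Ring R] {a c q : R} (hqa : ¬Commute q a)
    (hc : Commute c a) : q + c ≠ 0 := fun h =>
  hqa (eq_neg_of_add_eq_zero_left h ▸ hc.neg_left)

section DivisionRing

variable {R : Type*} [DivisionRing R] {a q : R}

lemma eval_conj_eq_zero_iff_mem_ker_twistedEval (hq : q ≠ 0) (a : R) (P : R[X]) :
    P.eval (q * a * q⁻¹) = 0 ↔ q ∈ (twistedEval a P).ker := by
  rw [LinearMap.mem_ker, twistedEval_apply_of_semiconjBy (semiconjBy_conj₀ hq a),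
    mul_eq_zero_iff_right hq]

lemma finite_ker_twistedEval_X_sub_C_conj (hq : q ≠ 0) (ha : (Set.centralizer {a}).Finite) :
    ((twistedEval a (X - C (q * a * q⁻¹))).ker : Set R).Finite := by
  refine (ha.image (q * ·)).subset fun s hs => ⟨q⁻¹ * s, ?_, mul_inv_cancel_left₀ hq s⟩
  have hs : SemiconjBy s a (q * a * q⁻¹) := by
    rwa [SetLike.mem_coe, LinearMap.mem_ker, twistedEval_X_sub_C, sub_eq_zero] at hs
  have hcomm : Commute (q⁻¹ * s) a := (semiconjBy_conj₀ hq a).inv_symm_left₀.mul_left hs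
  exact mem_centralizer_singleton.mpr hcomm

lemma finite_ker_twistedEval (ha : (Set.centralizer {a}).Finite) {P : R[X]} (hP : P ≠ 0) :
    ((twistedEval a P).ker : Set R).Finite := by
  induction hn : P.natDegree using Nat.strong_induction_on generalizing P with
  | _ n ih =>
  by_cases hker : ∃ r ∈ (twistedEval a P).ker, r ≠ 0
  · obtain ⟨r, hrP, hr⟩ := hker
    obtain ⟨Q, hQ⟩ := exists_eq_mul_X_sub_C_add_C_eval P (r * a * r⁻¹)
    rw [(eval_conj_eq_zero_iff_mem_ker_twistedEval hr a P).mpr hrP, C_0, add_zero] at hQ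
    have hQ0 : Q ≠ 0 := left_ne_zero_of_mul (hQ ▸ hP)
    have hdeg : Q.natDegree < n := by
      rw [← hn, hQ, natDegree_mul hQ0 (X_sub_C_ne_zero _), natDegree_X_sub_C]
      exact Nat.lt_succ_self _
    rw [hQ, map_mul]
    exact finite_ker_comp (ih _ hdeg hQ0 rfl) (finite_ker_twistedEval_X_sub_C_conj hr ha)
  · push Not at hker
    exact (Set.finite_singleton 0).subset hker

lemma finite_of_finite_centralizer (ha : (Set.centralizer {a}).Finite) : Finite R := by
  have hpow (n : ℕ) : a ^ n ∈ Set.centralizer {a} :=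
    mem_centralizer_singleton.mpr (Commute.pow_self a n)
  obtain ⟨m, n, hmn, heq⟩ := ha.exists_lt_map_eq_of_forall_mem hpow
  have hne : (X ^ n - X ^ m : R[X]) ≠ 0 :=
    sub_ne_zero.mpr fun h => hmn.ne' (by simpa using congrArg natDegree h)
  refine Set.finite_univ_iff.mp ((finite_ker_twistedEval ha hne).subset fun r _ => ?_)
  rw [SetLike.mem_coe, LinearMap.mem_ker, map_sub, LinearMap.sub_apply, twistedEval_X_pow,
    twistedEval_X_pow, heq, sub_self]

lemma infinite_centralizer_of_not_commute (hqa : ¬Commute q a) :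
    (Set.centralizer {a}).Infinite := by
  intro ha
  have := finite_of_finite_centralizer ha
  exact hqa ((littleWedderburn R).mul_comm q a)

lemma injOn_conj_add_centralizer (hqa : ¬Commute q a) :
    Set.InjOn (fun c => (q + c) * a * (q + c)⁻¹) (Set.centralizer {a}) := by
  intro c hc c' hc' heq
  by_contra hne
  rw [mem_centralizer_singleton] at hc hc'
  obtain ⟨b, hb⟩ : ∃ b, (q + c) * a * (q + c)⁻¹ = b := ⟨_, rfl⟩
  have hb' : (q + c') * a * (q + c')⁻¹ = b := heq.symm.trans hb
  have hsemi : SemiconjBy (q + c) a b :=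
    hb ▸ semiconjBy_conj₀ (add_ne_zero_of_not_commute hqa hc) a
  have hsemi' : SemiconjBy (q + c') a b :=
    hb' ▸ semiconjBy_conj₀ (add_ne_zero_of_not_commute hqa hc') a
  have hsub : SemiconjBy (c - c') a b := add_sub_add_left_eq_sub c c' q ▸ hsemi.sub_left hsemi'
  have hcomm : Commute (c - c') a := hc.sub_left hc'
  have hab : a = b := mul_right_cancel₀ (sub_ne_zero.mpr hne) (hcomm.eq.symm.trans hsub.eq)
  have hqc : Commute (q + c) a := hab ▸ hsemi
  exact hqa (add_sub_cancel_right q c ▸ hqc.sub_left hc)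

end DivisionRing

/-- If a polynomial over a division ring has two distinct right roots in one conjugacy
class, then it has infinitely many right roots in that class. -/
theorem stmt11 {R : Type*} [DivisionRing R] (P : R[X]) (a b : R) (hab : a ≠ b)
    (ha : P.eval a = 0) (hb : P.eval b = 0)
    (hconj : ∃ q : R, q ≠ 0 ∧ b = q * a * q⁻¹) :
    {d : R | (∃ q : R, q ≠ 0 ∧ d = q * a * q⁻¹) ∧ P.eval d = 0}.Infinite := by
  obtain ⟨q, hq, rfl⟩ := hconj
  have hqa : ¬Commute q a := fun h => hab ((eq_mul_inv_iff_mul_eq₀ hq).mpr h.eq.symm)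
  refine Set.infinite_of_injOn_mapsTo (injOn_conj_add_centralizer hqa) (fun c hc => ?_)
    (infinite_centralizer_of_not_commute hqa)
  rw [mem_centralizer_singleton] at hc
  have hqc : q + c ≠ 0 := add_ne_zero_of_not_commute hqa hc
  refine ⟨⟨q + c, hqc, rfl⟩, (eval_conj_eq_zero_iff_mem_ker_twistedEval hqc a P).mpr ?_⟩
  have hq_ker : q ∈ (twistedEval a P).ker :=
    (eval_conj_eq_zero_iff_mem_ker_twistedEval hq a P).mp hb
  have hc_ker : c ∈ (twistedEval a P).ker := by
    rw [LinearMap.mem_ker, twistedEval_apply_of_semiconjBy hc, ha, zero_mul]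
  exact add_mem hq_ker hc_ker
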